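/- arXiv:1403.5605 — 2 statements merged into one kernel-verified Lean document; each statement's English description precedes it below -/
import Mathlib

section
/- The Generalized Lamport's Bakery (GLB) algorithm satisfies the Deadlock Freedom property: in every execution in which no process stays in the critical section forever, if one or more processes are forever trying to enter their critical section with no success for any of them, then there exists a process that enters the critical section infinitely often; equivalently, no such execution exists. -/
/-! ## Model of the Generalized Lamport's Bakery (GLB) algorithm -/

/-- Program counter of a process in the GLB algorithm.  The doorway is
`setChoosing s` (Choosing[i]:=true), `setSession s` (Session[i]:=s),
`scan s j m` (computing the max of the other token numbers, `j` is the next index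
to inspect and `m` the running maximum), `setToken s m` (Token[i]:=m+1) and
`unsetChoosing s` (Choosing[i]:=false).  The waiting room consists of the two
busy-wait checks `wait1 s j` and `wait2 s j`, and the exit section of
`exit1` (Token[i]:=0) and `exit2` (Session[i]:=0). -/
inductive GLBPc : Type
  | remainder
  | setChoosing (s : ℕ)
  | setSession (s : ℕ)
  | scan (s : ℕ) (j : ℕ) (m : ℕ)
  | setToken (s : ℕ) (m : ℕ)
  | unsetChoosing (s : ℕ)
  | wait1 (s : ℕ) (j : ℕ)
  | wait2 (s : ℕ) (j : ℕ)
  | cs (s : ℕ)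
  | exit1
  | exit2
  deriving DecidableEq

/-- Global state: the shared arrays together with each process's control state. -/
structure GLBState (N : ℕ) where
  session : Fin N → ℕ
  token : Fin N → ℕ
  choosing : Fin N → Bool
  pc : Fin N → GLBPc

def glbInit (N : ℕ) : GLBState N :=
  { session := fun _ => 0, token := fun _ => 0, choosing := fun _ => false,
    pc := fun _ => GLBPc.remainder }

/-- One atomic step of process `i` of the GLB algorithm, transforming state `st`
into `st'`.  A process at `remainder` may stay put or pick an arbitrary positive
session; a failed busy-wait check is a stuttering step; a process in the CS may
stay or move to the exit section. -/
def glbStep {N : ℕ} (st : GLBState N) (i : Fin N) (st' : GLBState N) : Prop :=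
  match st.pc i with
  | .remainder =>
      st' = st ∨ ∃ s : ℕ, 0 < s ∧
        st' = { st with pc := Function.update st.pc i (.setChoosing s) }
  | .setChoosing s =>
      st' = { st with choosing := Function.update st.choosing i true,
                      pc := Function.update st.pc i (.setSession s) }
  | .setSession s =>
      st' = { st with session := Function.update st.session i s,
                      pc := Function.update st.pc i (.scan s 0 0) }
  | .scan s j m =>
      if h : j < N then
        st' = { st with pc := Function.update st.pc i (.scan s (j+1)
                  (if (⟨j, h⟩ : Fin N) = i then m else max m (st.token ⟨j, h⟩))) }
      else
        st' = { st with pc := Function.update st.pc i (.setToken s m) }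
  | .setToken s m =>
      st' = { st with token := Function.update st.token i (m + 1),
                      pc := Function.update st.pc i (.unsetChoosing s) }
  | .unsetChoosing s =>
      st' = { st with choosing := Function.update st.choosing i false,
                      pc := Function.update st.pc i (.wait1 s 0) }
  | .wait1 s j =>
      if h : j < N then
        if st.choosing ⟨j, h⟩ = false ∨ st.session ⟨j, h⟩ = 0 ∨ st.session ⟨j, h⟩ = s then
          st' = { st with pc := Function.update st.pc i (.wait2 s j) }
        else st' = st
      else
        st' = { st with pc := Function.update st.pc i (.cs s) }
  | .wait2 s j =>
      if h : j < N then
        if (st.token i < st.token ⟨j, h⟩ ∨ (st.token i = st.token ⟨j, h⟩ ∧ i.val < j)) ∨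
            st.token ⟨j, h⟩ = 0 ∨ st.session ⟨j, h⟩ = 0 ∨ st.session ⟨j, h⟩ = s then
          st' = { st with pc := Function.update st.pc i (.wait1 s (j+1)) }
        else st' = st
      else st' = st
  | .cs _ =>
      st' = st ∨ st' = { st with pc := Function.update st.pc i .exit1 }
  | .exit1 =>
      st' = { st with token := Function.update st.token i 0,
                      pc := Function.update st.pc i .exit2 }
  | .exit2 =>
      st' = { st with session := Function.update st.session i 0,
                      pc := Function.update st.pc i .remainder }

/-- An execution of the GLB algorithm: an interleaving of atomic steps
(`sched n` is the process taking the `n`-th step), starting from the initial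
state, in which every process outside its remainder section eventually takes
its next step. -/
structure GLBExec (N : ℕ) where
  state : ℕ → GLBState N
  sched : ℕ → Fin N
  init : state 0 = glbInit N
  step : ∀ n, glbStep (state n) (sched n) (state (n + 1))
  fair : ∀ (i : Fin N) (n : ℕ), (state n).pc i ≠ GLBPc.remainder →
           ∃ m, n ≤ m ∧ sched m = i

/-- Process `i` is in the critical section. -/
def glbInCS {N : ℕ} (st : GLBState N) (i : Fin N) : Prop := ∃ s, st.pc i = GLBPc.cs s

/-- Process `i` is in the entry section (doorway or waiting room). -/
def glbInEntry {N : ℕ} (st : GLBState N) (i : Fin N) : Prop :=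
  match st.pc i with
  | .remainder => False
  | .cs _ => False
  | .exit1 => False
  | .exit2 => False
  | _ => True

/-- At step `n`, process `i` leaves the remainder and enters the doorway,
requesting session `s`. -/
def glbEntersDoorway {N : ℕ} (e : GLBExec N) (i : Fin N) (s : ℕ) (n : ℕ) : Prop :=
  (e.state n).pc i = GLBPc.remainder ∧ (e.state (n+1)).pc i = GLBPc.setChoosing s

/-- At step `n`, process `i` completes its doorway (executes Choosing[i]:=false). -/
def glbCompletesDoorway {N : ℕ} (e : GLBExec N) (i : Fin N) (s : ℕ) (n : ℕ) : Prop :=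
  (e.state n).pc i = GLBPc.unsetChoosing s ∧ (e.state (n+1)).pc i = GLBPc.wait1 s 0

/-- At step `n`, process `i` enters the critical section. -/
def glbEntersCS {N : ℕ} (e : GLBExec N) (i : Fin N) (n : ℕ) : Prop :=
  ¬ glbInCS (e.state n) i ∧ glbInCS (e.state (n+1)) i

/-- Process `i` does not pass through the remainder section during `(a, b]`
(so times `a` and `b` belong to the same invocation of `i`). -/
def glbActiveThrough {N : ℕ} (e : GLBExec N) (i : Fin N) (a b : ℕ) : Prop :=
  ∀ k, a < k → k ≤ b → (e.state k).pc i ≠ GLBPc.remainder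

/-! ### Remote memory references in the cache-coherent (CC) model -/

/-- The shared variables of the GLB algorithm. -/
inductive GLBVar (N : ℕ) : Type
  | session (j : Fin N)
  | token (j : Fin N)
  | choosing (j : Fin N)
  deriving DecidableEq

/-- Shared variables read by the next step of process `i` in state `st`. -/
def glbReads {N : ℕ} (st : GLBState N) (i : Fin N) : Finset (GLBVar N) :=
  match st.pc i with
  | .scan _ j _ => if h : j < N then {GLBVar.token ⟨j, h⟩} else ∅
  | .wait1 _ j => if h : j < N then {GLBVar.choosing ⟨j, h⟩, GLBVar.session ⟨j, h⟩} else ∅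
  | .wait2 _ j => if h : j < N then
      {GLBVar.token i, GLBVar.token ⟨j, h⟩, GLBVar.session ⟨j, h⟩} else ∅
  | _ => ∅

/-- Shared variables written by the next step of process `i` in state `st`. -/
def glbWrites {N : ℕ} (st : GLBState N) (i : Fin N) : Finset (GLBVar N) :=
  match st.pc i with
  | .setChoosing _ => {GLBVar.choosing i}
  | .setSession _ => {GLBVar.session i}
  | .setToken _ _ => {GLBVar.token i}
  | .unsetChoosing _ => {GLBVar.choosing i}
  | .exit1 => {GLBVar.token i}
  | .exit2 => {GLBVar.session i}
  | _ => ∅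

/-- `glbCached e n p v` holds iff just before step `n`, process `p` holds a valid
cached copy of variable `v`: a copy is acquired by reading `v` and stays valid
until some process writes `v`. -/
def glbCached {N : ℕ} (e : GLBExec N) : ℕ → Fin N → GLBVar N → Bool
  | 0, _, _ => false
  | n + 1, p, v =>
      (glbCached e n p v || (decide (e.sched n = p) && decide (v ∈ glbReads (e.state n) p)))
        && ! decide (v ∈ glbWrites (e.state n) (e.sched n))

/-- The number of remote memory references incurred by step `n` of the execution:
every write is an RMR, and a read is an RMR iff the stepping process holds no
valid cached copy. -/
def glbStepRMR {N : ℕ} (e : GLBExec N) (n : ℕ) : ℕ :=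
  (glbWrites (e.state n) (e.sched n)).card +
    ((glbReads (e.state n) (e.sched n)).filter
      (fun v => glbCached e n (e.sched n) v = false)).card

/-!
A process that moves without entering its critical section gets strictly closer to its next entry,
so an execution with finitely many entries reaches a state that never changes again. In such a state
every active process is blocked in the waiting room. Since no process is choosing any more, it is
blocked by the token of a conflicting process whose ticket `(Token[j], j)` is no larger than its
own; as the sessions differ, this is another process, active and with a strictly smaller ticket.
Tickets are well-founded, so no process is active at all.
-/

section

open Filter

theorem eventuallyConst_atTop_of_lt_of_ne {α β : Type*} [Preorder β] [WellFoundedLT β]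
    {u : ℕ → α} (f : α → β) (h : ∀ᶠ n in atTop, u (n + 1) ≠ u n → f (u (n + 1)) < f (u n)) :
    EventuallyConst u atTop := by
  obtain ⟨M, hM⟩ := eventually_atTop.mp h
  obtain ⟨T, hMT, hmin⟩ :=
    exists_minimalFor_of_wellFoundedLT (M ≤ ·) (fun n => f (u n)) ⟨M, le_rfl⟩
  refine eventuallyConst_atTop.mpr ⟨T, fun n hTn => ?_⟩
  induction n, hTn using Nat.le_induction with
  | base => rfl
  | succ n hTn ih =>
    by_contra hne
    have hlt : f (u (n + 1)) < f (u T) := ih ▸ hM n (hMT.trans hTn) (ih ▸ hne)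
    exact hlt.not_ge (hmin (hMT.trans (hTn.trans n.le_succ)) hlt.le)

end

/-- The distance of a program counter from the next entry into the critical section: the number of
moves to be made before the entering one, failed busy-wait checks not being counted. -/
def GLBPc.rank (N : ℕ) : GLBPc → ℕ
  | .wait1 _ j => 2 * (N - j)
  | .wait2 _ j => 2 * (N - j) - 1
  | .unsetChoosing _ => 2 * N + 1
  | .setToken _ _ => 2 * N + 2
  | .scan _ j _ => 2 * N + 3 + (N - j)
  | .setSession _ => 3 * N + 4
  | .setChoosing _ => 3 * N + 5
  | .remainder => 3 * N + 6
  | .exit2 => 3 * N + 7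
  | .exit1 => 3 * N + 8
  | .cs _ => 3 * N + 9

namespace GLBState

variable {N : ℕ}

/-- The total distance of all processes from their next entries into the critical section. -/
def potential (st : GLBState N) : ℕ := ∑ i, (st.pc i).rank N

/-- The pair `(Token[i], i)` by which the waiting room compares processes, ordered
lexicographically. -/
def ticket (st : GLBState N) (i : Fin N) : ℕ ×ₗ Fin N := toLex (st.token i, i)

/-- The invariant tying the shared variables of process `i` to its program counter. -/
def LocalInv (st : GLBState N) (i : Fin N) : Prop :=
  match st.pc i with
  | .remainder | .exit2 => st.token i = 0 ∧ st.choosing i = false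
  | .setChoosing _ | .setSession _ => True
  | .scan s _ _ | .setToken s _ | .unsetChoosing s => st.session i = s
  | .wait1 s _ => st.session i = s ∧ st.choosing i = false
  | .wait2 s j => st.session i = s ∧ st.choosing i = false ∧ j < N
  | .cs _ | .exit1 => st.choosing i = false

/-- A state is stuck if every process outside its remainder section has a step that leaves the
state unchanged, as happens in an execution that has come to rest. -/
def Stuck (st : GLBState N) : Prop := ∀ i, st.pc i ≠ .remainder → glbStep st i st

theorem eq_iff_forall {st st' : GLBState N} :
    st = st' ↔ ∀ i, st.session i = st'.session i ∧ st.token i = st'.token i ∧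
      st.choosing i = st'.choosing i ∧ st.pc i = st'.pc i := by
  cases st; cases st'; simp [funext_iff, forall_and]

end GLBState

namespace glbStep

variable {N : ℕ} {st st' : GLBState N} {i j : Fin N}

theorem frame (h : glbStep st i st') (hj : j ≠ i) :
    st'.pc j = st.pc j ∧ st'.session j = st.session j ∧ st'.token j = st.token j ∧
      st'.choosing j = st.choosing j := by
  cases hpc : st.pc i <;>
    simp only [glbStep, hpc, GLBState.eq_iff_forall, Function.update_apply] at h <;> grind

theorem localInv (h : glbStep st i st') (hj : st.LocalInv j) : st'.LocalInv j := by
  obtain rfl | hji := eq_or_ne j i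
  · cases hpc : st.pc j <;> simp only [GLBState.LocalInv, hpc] at hj <;>
      simp only [glbStep, hpc, GLBState.eq_iff_forall, Function.update_apply] at h <;>
      grind [GLBState.LocalInv]
  · obtain ⟨hpc, hsession, htoken, hchoosing⟩ := h.frame hji
    simpa only [GLBState.LocalInv, hpc, hsession, htoken, hchoosing] using hj

theorem eq_of_pc_eq (h : glbStep st i st') (heq : st'.pc i = st.pc i) : st' = st := by
  cases hpc : st.pc i <;>
    simp only [glbStep, hpc, GLBState.eq_iff_forall, Function.update_apply] at h ⊢ <;> grind

theorem rank_lt (h : glbStep st i st') (hne : st'.pc i ≠ st.pc i)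
    (hcs : glbInCS st' i → glbInCS st i) : (st'.pc i).rank N < (st.pc i).rank N := by
  cases hpc : st.pc i <;>
    simp only [glbStep, hpc, GLBState.eq_iff_forall, Function.update_apply] at h <;>
    grind [GLBPc.rank, glbInCS]

theorem potential_lt (h : glbStep st i st') (hne : st' ≠ st)
    (hcs : glbInCS st' i → glbInCS st i) : st'.potential < st.potential := by
  have hlt := h.rank_lt (mt h.eq_of_pc_eq hne) hcs
  refine Finset.sum_lt_sum (fun j _ => ?_) ⟨i, Finset.mem_univ i, hlt⟩
  obtain rfl | hji := eq_or_ne j i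
  · exact hlt.le
  · rw [(h.frame hji).1]

theorem waiting_of_self (h : glbStep st i st) (hrem : st.pc i ≠ .remainder)
    (hcs : ¬ glbInCS st i) : (∃ s k, st.pc i = .wait1 s k) ∨ ∃ s k, st.pc i = .wait2 s k := by
  cases hpc : st.pc i <;>
    simp only [glbStep, hpc, GLBState.eq_iff_forall, Function.update_apply] at h <;>
    grind [glbInCS]

theorem exists_choosing_of_self_wait1 {s k : ℕ} (h : glbStep st i st) (hpc : st.pc i = .wait1 s k) :
    ∃ j, st.choosing j = true := by
  simp only [glbStep, hpc, GLBState.eq_iff_forall, Function.update_apply] at h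
  grind

theorem blocked_of_self_wait2 {s : ℕ} (h : glbStep st i st) (hpc : st.pc i = .wait2 s j) :
    st.token j ≠ 0 ∧ st.session j ≠ s ∧ st.ticket j ≤ st.ticket i := by
  simp only [glbStep, hpc, GLBState.eq_iff_forall, Function.update_apply] at h
  grind [GLBState.ticket, Prod.Lex.toLex_le_toLex]

end glbStep

namespace GLBState

variable {N : ℕ} {st : GLBState N} {i : Fin N}

theorem ticket_injective : Function.Injective st.ticket :=
  fun _ _ h => congrArg (fun t => (ofLex t).2) h

theorem LocalInv.pc_ne_remainder (h : st.LocalInv i) (htoken : st.token i ≠ 0) :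
    st.pc i ≠ .remainder := by
  grind [LocalInv]

namespace Stuck

theorem choosing_eq_false (hst : st.Stuck) (hinv : st.LocalInv i) : st.choosing i = false := by
  by_cases hrem : st.pc i = .remainder
  · grind [LocalInv]
  by_cases hcs : glbInCS st i
  · grind [LocalInv, glbInCS]
  obtain ⟨s, k, hpc⟩ | ⟨s, k, hpc⟩ := (hst i hrem).waiting_of_self hrem hcs <;> grind [LocalInv]

theorem exists_pc_eq_wait2 (hst : st.Stuck) (hinv : ∀ i, st.LocalInv i) (hcs : ¬ glbInCS st i)
    (hi : st.pc i ≠ .remainder) : ∃ (s : ℕ) (j : Fin N), st.pc i = .wait2 s j := by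
  obtain ⟨s, k, hpc⟩ | ⟨s, k, hpc⟩ := (hst i hi).waiting_of_self hi hcs
  · obtain ⟨j, hj⟩ := (hst i hi).exists_choosing_of_self_wait1 hpc
    simp [hst.choosing_eq_false (hinv j)] at hj
  · have hk : k < N := by grind [LocalInv, hinv i]
    exact ⟨s, ⟨k, hk⟩, hpc⟩

theorem exists_ticket_lt (hst : st.Stuck) (hinv : ∀ i, st.LocalInv i) (hcs : ¬ glbInCS st i)
    (hi : st.pc i ≠ .remainder) : ∃ j, st.pc j ≠ .remainder ∧ st.ticket j < st.ticket i := by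
  obtain ⟨s, j, hpc⟩ := hst.exists_pc_eq_wait2 hinv hcs hi
  obtain ⟨htoken, hsession, hle⟩ := (hst i hi).blocked_of_self_wait2 hpc
  have hs : st.session i = s := by grind [LocalInv, hinv i]
  have hji : j ≠ i := fun h => hsession (h ▸ hs)
  exact ⟨j, (hinv j).pc_ne_remainder htoken, hle.lt_of_ne (ticket_injective.ne hji)⟩

theorem pc_eq_remainder (hst : st.Stuck) (hinv : ∀ i, st.LocalInv i)
    (hcs : ∀ i, ¬ glbInCS st i) (i : Fin N) : st.pc i = .remainder := by
  induction i using (InvImage.wf st.ticket wellFounded_lt).induction with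
  | _ i ih =>
    by_contra hi
    obtain ⟨j, hj, hlt⟩ := hst.exists_ticket_lt hinv (hcs i) hi
    exact hj (ih j hlt)

end Stuck

end GLBState

namespace GLBExec

open Filter

variable {N : ℕ} (e : GLBExec N)

theorem localInv (n : ℕ) (i : Fin N) : (e.state n).LocalInv i := by
  induction n with
  | zero => simp [e.init, glbInit, GLBState.LocalInv]
  | succ n ih => exact (e.step n).localInv ih

theorem eventuallyConst_state (h : ∀ᶠ n in atTop, ∀ k, ¬ glbEntersCS e k n) :
    EventuallyConst e.state atTop := by
  refine eventuallyConst_atTop_of_lt_of_ne GLBState.potential (h.mono fun n hn hne => ?_)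
  exact (e.step n).potential_lt hne fun hcs => by_contra fun hout => hn _ ⟨hout, hcs⟩

variable {e}

theorem stuck_of_forall_state_eq {T : ℕ} (hT : ∀ n, T ≤ n → e.state n = e.state T) :
    (e.state T).Stuck := by
  intro i hi
  obtain ⟨n, hn, rfl⟩ := e.fair i T hi
  simpa only [hT n hn, hT (n + 1) (hn.trans n.le_succ)] using e.step n

end GLBExec

theorem glb_deadlock_freedom_general {N : ℕ} (e : GLBExec N)
    (hncs : ∀ (i : Fin N) (n : ℕ), glbInCS (e.state n) i →
      ∃ m, n ≤ m ∧ ¬ glbInCS (e.state m) i)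
    (hactive : ∀ n : ℕ, ∃ m, n ≤ m ∧ ∃ i, (e.state m).pc i ≠ .remainder) :
    ∃ k : Fin N, ∀ m : ℕ, ∃ m', m ≤ m' ∧ glbEntersCS e k m' := by
  by_contra! hfin
  have hnoEntry : ∀ᶠ n in Filter.atTop, ∀ k, ¬ glbEntersCS e k n :=
    Filter.eventually_all.mpr fun k => Filter.eventually_atTop.mpr (hfin k)
  obtain ⟨T, hT⟩ := Filter.eventuallyConst_atTop.mp (e.eventuallyConst_state hnoEntry)
  have hcs : ∀ i, ¬ glbInCS (e.state T) i := fun i hi => by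
    obtain ⟨m, hm, hout⟩ := hncs i T hi
    exact hout (hT m hm ▸ hi)
  obtain ⟨m, hm, i, hi⟩ := hactive T
  rw [hT m hm] at hi
  exact hi ((GLBExec.stuck_of_forall_state_eq hT).pc_eq_remainder (e.localInv T) hcs i)

/-- **Deadlock freedom for the GLB algorithm** (property P6).  In every execution in which
no process stays in the critical section forever, if some process is forever trying to
enter its critical section (it remains in the entry section from some time `n` on, hence
without success), then some process enters the critical section infinitely often. -/
theorem glb_deadlock_freedom {N : ℕ} (e : GLBExec N)
    (hncs : ∀ (i : Fin N) (n : ℕ), glbInCS (e.state n) i →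
      ∃ m, n ≤ m ∧ ¬ glbInCS (e.state m) i)
    (i : Fin N) (n : ℕ) (htry : ∀ m, n ≤ m → glbInEntry (e.state m) i) :
    ∃ k : Fin N, ∀ m : ℕ, ∃ m', m ≤ m' ∧ glbEntersCS e k m' := by
  refine glb_deadlock_freedom_general e hncs fun m =>
    ⟨max n m, le_max_right n m, i, fun hrem => ?_⟩
  simpa [glbInEntry, hrem] using htry (max n m) (le_max_left n m)
end

section
/- In every execution of the BWBGME algorithm, if process P_i doorway-precedes process P_j and the two processes request different sessions, then P_j does not enter the critical section before P_i enters the critical section (the FCFS property holds). -/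
/-! ## Model of the Black and White Bakery GME (BWBGME) algorithm -/

inductive Color : Type
  | black
  | white
  deriving DecidableEq

/-- The opposite color. -/
def Color.opp : Color → Color
  | .black => .white
  | .white => .black

/-- A token: a session number, a color in {black, white, ⊥} (`none` is ⊥) and a
token number. -/
structure BWTok where
  session : ℕ
  color : Option Color
  number : ℕ
  deriving DecidableEq

def BWTok.init : BWTok := ⟨0, none, 0⟩

/-- Program counter of a process in the BWBGME algorithm.  The doorway is
`d1 s` (Token[i]:=(s,⊥,0)), `d2 s` (Choosing[i]:=true, line 4),
`d3 s` (mycolor:=GlobalColor, line 5), `scan s c j m` (the loop computing the max `m`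
of the token numbers of conflicting processes with token color `c`; `j` is the next
index to read), `d4 s c m` (Token[i]:=(s,c,m), where `m` is the final mynumber) and
`d5 s c m` (Choosing[i]:=false).  The waiting room iterates, for each `j`:
`w1` (wait until Choosing[j]=false or Token[j].session=s), `wB` (the branch reading
Token[j].color), and the busy-waits `wSame` / `wDiff`.  The exit section is the scan
`x1 s c m j` looking for an active process of the opposite color (entered only when
`m ≠ 1`), `xFlip s c m` (GlobalColor := opposite of `c`) and `x2` (Token[i]:=(0,⊥,0)). -/
inductive BWPc : Type
  | remainder
  | d1 (s : ℕ)
  | d2 (s : ℕ)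
  | d3 (s : ℕ)
  | scan (s : ℕ) (c : Color) (j : ℕ) (m : ℕ)
  | d4 (s : ℕ) (c : Color) (m : ℕ)
  | d5 (s : ℕ) (c : Color) (m : ℕ)
  | w1 (s : ℕ) (c : Color) (m : ℕ) (j : ℕ)
  | wB (s : ℕ) (c : Color) (m : ℕ) (j : ℕ)
  | wSame (s : ℕ) (c : Color) (m : ℕ) (j : ℕ)
  | wDiff (s : ℕ) (c : Color) (m : ℕ) (j : ℕ)
  | cs (s : ℕ) (c : Color) (m : ℕ)
  | x1 (s : ℕ) (c : Color) (m : ℕ) (j : ℕ)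
  | xFlip (s : ℕ) (c : Color) (m : ℕ)
  | x2
  deriving DecidableEq

/-- Global state: GlobalColor, the shared arrays Token and Choosing, and the
control state of each process. -/
structure BWState (N : ℕ) where
  gcolor : Color
  token : Fin N → BWTok
  choosing : Fin N → Bool
  pc : Fin N → BWPc

/-- Initial state; GlobalColor is initialized arbitrarily to `c0`. -/
def bwInit (N : ℕ) (c0 : Color) : BWState N :=
  { gcolor := c0, token := fun _ => BWTok.init, choosing := fun _ => false,
    pc := fun _ => BWPc.remainder }

/-- One atomic step of process `i` of the BWBGME algorithm. -/
def bwStep {N : ℕ} (st : BWState N) (i : Fin N) (st' : BWState N) : Prop :=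
  match st.pc i with
  | .remainder =>
      st' = st ∨ ∃ s : ℕ, 0 < s ∧ st' = { st with pc := Function.update st.pc i (.d1 s) }
  | .d1 s =>
      st' = { st with token := Function.update st.token i ⟨s, none, 0⟩,
                      pc := Function.update st.pc i (.d2 s) }
  | .d2 s =>
      st' = { st with choosing := Function.update st.choosing i true,
                      pc := Function.update st.pc i (.d3 s) }
  | .d3 s =>
      st' = { st with pc := Function.update st.pc i (.scan s st.gcolor 0 0) }
  | .scan s c j m =>
      if h : j < N then
        st' = { st with pc := Function.update st.pc i (.scan s c (j+1)
                  (if (st.token ⟨j, h⟩).color = some c ∧ (st.token ⟨j, h⟩).session ≠ 0 ∧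
                      (st.token ⟨j, h⟩).session ≠ s
                   then max m (st.token ⟨j, h⟩).number else m)) }
      else
        st' = { st with pc := Function.update st.pc i (.d4 s c (m+1)) }
  | .d4 s c m =>
      st' = { st with token := Function.update st.token i ⟨s, some c, m⟩,
                      pc := Function.update st.pc i (.d5 s c m) }
  | .d5 s c m =>
      st' = { st with choosing := Function.update st.choosing i false,
                      pc := Function.update st.pc i (.w1 s c m 0) }
  | .w1 s c m j =>
      if h : j < N then
        if st.choosing ⟨j, h⟩ = false ∨ (st.token ⟨j, h⟩).session = s then
          st' = { st with pc := Function.update st.pc i (.wB s c m j) }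
        else st' = st
      else
        st' = { st with pc := Function.update st.pc i (.cs s c m) }
  | .wB s c m j =>
      if h : j < N then
        if (st.token ⟨j, h⟩).color = some c then
          st' = { st with pc := Function.update st.pc i (.wSame s c m j) }
        else
          st' = { st with pc := Function.update st.pc i (.wDiff s c m j) }
      else st' = st
  | .wSame s c m j =>
      if h : j < N then
        if (m < (st.token ⟨j, h⟩).number ∨ (m = (st.token ⟨j, h⟩).number ∧ i.val < j)) ∨
            (st.token ⟨j, h⟩).color ≠ some c ∨ (st.token ⟨j, h⟩).session = 0 ∨
            (st.token ⟨j, h⟩).session = s then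
          st' = { st with pc := Function.update st.pc i (.w1 s c m (j+1)) }
        else st' = st
      else st' = st
  | .wDiff s c m j =>
      if h : j < N then
        if st.gcolor ≠ c ∨ (st.token ⟨j, h⟩).color = some c ∨
            (st.token ⟨j, h⟩).session = 0 ∨ (st.token ⟨j, h⟩).session = s then
          st' = { st with pc := Function.update st.pc i (.w1 s c m (j+1)) }
        else st' = st
      else st' = st
  | .cs s c m =>
      st' = st ∨
        st' = { st with pc :=
                  Function.update st.pc i (if m = 1 then BWPc.x2 else BWPc.x1 s c m 0) }
  | .x1 s c m j =>
      if h : j < N then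
        if (st.token ⟨j, h⟩).session ≠ 0 ∧ (st.token ⟨j, h⟩).color = some c.opp then
          st' = { st with pc := Function.update st.pc i .x2 }
        else
          st' = { st with pc := Function.update st.pc i (.x1 s c m (j+1)) }
      else
        st' = { st with pc := Function.update st.pc i (.xFlip s c m) }
  | .xFlip _ c _ =>
      st' = { st with gcolor := c.opp, pc := Function.update st.pc i .x2 }
  | .x2 =>
      st' = { st with token := Function.update st.token i BWTok.init,
                      pc := Function.update st.pc i .remainder }

/-- An execution of the BWBGME algorithm: an interleaving of atomic steps from an
initial state (with arbitrary GlobalColor) in which every process outside its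
remainder section eventually takes its next step. -/
structure BWExec (N : ℕ) where
  state : ℕ → BWState N
  sched : ℕ → Fin N
  init : ∃ c0, state 0 = bwInit N c0
  step : ∀ n, bwStep (state n) (sched n) (state (n + 1))
  fair : ∀ (i : Fin N) (n : ℕ), (state n).pc i ≠ BWPc.remainder →
           ∃ m, n ≤ m ∧ sched m = i

/-- Process `i` is in the critical section. -/
def bwInCS {N : ℕ} (st : BWState N) (i : Fin N) : Prop :=
  ∃ s c m, st.pc i = BWPc.cs s c m

/-- Process `i` is in the entry section (doorway or waiting room). -/
def bwInEntry {N : ℕ} (st : BWState N) (i : Fin N) : Prop :=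
  match st.pc i with
  | .remainder => False
  | .cs _ _ _ => False
  | .x1 _ _ _ _ => False
  | .xFlip _ _ _ => False
  | .x2 => False
  | _ => True

/-- At step `n`, process `i` leaves the remainder and enters the doorway,
requesting session `s`. -/
def bwEntersDoorway {N : ℕ} (e : BWExec N) (i : Fin N) (s : ℕ) (n : ℕ) : Prop :=
  (e.state n).pc i = BWPc.remainder ∧ (e.state (n+1)).pc i = BWPc.d1 s

/-- At step `n`, process `i` completes its doorway (executes Choosing[i]:=false),
having requested session `s` and chosen token color `c` and token number `m`. -/
def bwCompletesDoorway {N : ℕ} (e : BWExec N) (i : Fin N) (s : ℕ) (c : Color) (m : ℕ)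
    (n : ℕ) : Prop :=
  (e.state n).pc i = BWPc.d5 s c m ∧ (e.state (n+1)).pc i = BWPc.w1 s c m 0

/-- At step `n`, process `i` executes line 5, reading GlobalColor = `c`
(its invocation requests session `s`). -/
def bwLine5 {N : ℕ} (e : BWExec N) (i : Fin N) (s : ℕ) (c : Color) (n : ℕ) : Prop :=
  (e.state n).pc i = BWPc.d3 s ∧ (e.state (n+1)).pc i = BWPc.scan s c 0 0

/-- At step `n`, process `i` executes line 4 (Choosing[i]:=true). -/
def bwLine4 {N : ℕ} (e : BWExec N) (i : Fin N) (s : ℕ) (n : ℕ) : Prop :=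
  (e.state n).pc i = BWPc.d2 s ∧ (e.state (n+1)).pc i = BWPc.d3 s

/-- At step `n`, process `i` enters the critical section. -/
def bwEntersCS {N : ℕ} (e : BWExec N) (i : Fin N) (n : ℕ) : Prop :=
  ¬ bwInCS (e.state n) i ∧ bwInCS (e.state (n+1)) i

/-- At step `n`, process `i` finishes (leaves) the critical section. -/
def bwLeavesCS {N : ℕ} (e : BWExec N) (i : Fin N) (n : ℕ) : Prop :=
  bwInCS (e.state n) i ∧ ¬ bwInCS (e.state (n+1)) i

/-- At step `n`, process `i` completes its exit section
(executes Token[i]:=(0,⊥,0) and returns to the remainder section). -/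
def bwCompletesExit {N : ℕ} (e : BWExec N) (i : Fin N) (n : ℕ) : Prop :=
  (e.state n).pc i = BWPc.x2 ∧ (e.state (n+1)).pc i = BWPc.remainder

/-- Process `i` does not pass through the remainder section during `(a, b]`
(so times `a` and `b` belong to the same invocation of `i`). -/
def bwActiveThrough {N : ℕ} (e : BWExec N) (i : Fin N) (a b : ℕ) : Prop :=
  ∀ k, a < k → k ≤ b → (e.state k).pc i ≠ BWPc.remainder

/-- GlobalColor is flipped at step `n`: the step is a write that changes its value. -/
def bwFlipAt {N : ℕ} (e : BWExec N) (n : ℕ) : Prop :=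
  (e.state (n+1)).gcolor ≠ (e.state n).gcolor

/-!
While a process `i` of color `c` waits and GlobalColor is the opposite color, GlobalColor cannot
change. The reason is that a process about to flip GlobalColor, from `c'` to the opposite color,
coexists with no process of that opposite color, even one that has read it and not published it
yet. Such a stale process keeps its Choosing flag up, which holds every conflicting process of
color `c'` in its waiting room; a process of the same session as the stale one is held by one of
these, since its number is at least 2 and hence exceeds the number of a conflicting process of its
own color. So none of them reaches the exit scan.

A later process `j` thus either takes color `c` and a number larger than that of `i`, or takes the
color in which GlobalColor is stuck; in both cases its waiting room holds it behind `i`.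
-/

/-- The color read from GlobalColor by a process that has not published it yet. -/
def BWPc.pendingColor : BWPc → Option Color
  | .scan _ c _ _ | .d4 _ c _ => some c
  | _ => none

/-- The session requested by a process, from its doorway up to its exit scan. -/
def BWPc.session : BWPc → Option ℕ
  | .remainder | .x2 => none
  | .d1 s | .d2 s | .d3 s | .scan s _ _ _ | .d4 s _ _ | .d5 s _ _ | .w1 s _ _ _ | .wB s _ _ _
  | .wSame s _ _ _ | .wDiff s _ _ _ | .cs s _ _ | .x1 s _ _ _ | .xFlip s _ _ => some s

/-- The color and number of a process from line 5 to the end of its exit scan. During the doorway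
scan, the number is the one the process would choose if the scan stopped now. -/
def BWPc.ticket : BWPc → Option (Color × ℕ)
  | .scan _ c _ m => some (c, m + 1)
  | .d4 _ c m | .d5 _ c m | .w1 _ c m _ | .wB _ c m _ | .wSame _ c m _ | .wDiff _ c m _
  | .cs _ c m | .x1 _ c m _ | .xFlip _ c m => some (c, m)
  | _ => none

/-- The process has read `Token[n]` in its doorway scan. -/
def BWPc.Scanned (n : ℕ) : BWPc → Prop
  | .remainder | .d1 _ | .d2 _ | .d3 _ => False
  | .scan _ _ j _ => n < j
  | _ => True

/-- The process has passed the test on `Choosing[n]` in its waiting room. -/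
def BWPc.PastChoosing (n : ℕ) : BWPc → Prop
  | .w1 _ _ _ j => n < j
  | .wB _ _ _ j | .wSame _ _ _ j | .wDiff _ _ _ j => n ≤ j
  | .cs _ _ _ | .x1 _ _ _ _ | .xFlip _ _ _ | .x2 => True
  | _ => False

/-- The process has passed index `n` in its waiting room, or it is in the busy-wait at index `n`
which it would not have chosen had `Token[n]` been of color `c`. -/
def BWPc.PastTurn (n : ℕ) (c : Color) : BWPc → Prop
  | .w1 _ _ _ j | .wB _ _ _ j => n < j
  | .wSame _ c' _ j => n < j ∨ n = j ∧ c' ≠ c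
  | .wDiff _ c' _ j => n < j ∨ n = j ∧ c' = c
  | .cs _ _ _ | .x1 _ _ _ _ | .xFlip _ _ _ | .x2 => True
  | _ => False

/-- The process has color `c`, and its exit scan has examined index `n` without finding a process
of the opposite color. -/
def BWPc.ExitChecked (c : Color) (n : ℕ) : BWPc → Prop
  | .x1 _ c' _ j => c' = c ∧ n < j
  | .xFlip _ c' _ => c' = c
  | _ => False

/-- The process is in its waiting room. -/
def BWPc.Waiting : BWPc → Prop
  | .w1 _ _ _ _ | .wB _ _ _ _ | .wSame _ _ _ _ | .wDiff _ _ _ _ => True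
  | _ => False

/-- Agreement of the control state of a process with its shared variables `t` and `ch`. -/
def BWPc.Consistent (t : BWTok) (ch : Bool) : BWPc → Prop
  | .remainder => t = BWTok.init
  | .d1 s => t = BWTok.init ∧ 0 < s
  | .d2 s => t = ⟨s, none, 0⟩ ∧ 0 < s
  | .d3 s | .scan s _ _ _ | .d4 s _ _ => t = ⟨s, none, 0⟩ ∧ 0 < s ∧ ch = true
  | .d5 s c m | .w1 s c m _ | .wB s c m _ | .wSame s c m _ | .wDiff s c m _
  | .cs s c m => t = ⟨s, some c, m⟩ ∧ 0 < s
  | .x1 s c m _ | .xFlip s c m => t = ⟨s, some c, m⟩ ∧ 0 < s ∧ m ≠ 1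
  | .x2 => 0 < t.session

/-- The token `t` is counted by the doorway scan of a process of session `s` and color `c`. -/
def BWTok.Conflicts (t : BWTok) (s : ℕ) (c : Color) : Prop :=
  t.color = some c ∧ t.session ≠ 0 ∧ t.session ≠ s

theorem Color.opp_ne (c : Color) : c.opp ≠ c := by
  cases c <;> simp [Color.opp]

theorem Color.opp_eq_of_ne {c c' : Color} (h : c ≠ c') : c.opp = c' := by
  cases c <;> cases c' <;> simp_all [Color.opp]

section

variable {N : ℕ} {st st' : BWState N} {p : Fin N}

/-- Process `i` has adopted color `c`, whether or not it has published it yet. -/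
def BWState.HasColor (st : BWState N) (i : Fin N) (c : Color) : Prop :=
  (st.pc i).pendingColor = some c ∨ (st.token i).color = some c

namespace bwStep

theorem frame (h : bwStep st p st') {i : Fin N} (hi : i ≠ p) :
    st'.pc i = st.pc i ∧ st'.token i = st.token i ∧ st'.choosing i = st.choosing i := by
  unfold bwStep at h
  split at h <;> (try split_ifs at h) <;> first | subst h | rcases h with rfl | ⟨_, _, rfl⟩
  all_goals grind

theorem consistent_self (h : bwStep st p st')
    (hp : (st.pc p).Consistent (st.token p) (st.choosing p)) :
    (st'.pc p).Consistent (st'.token p) (st'.choosing p) := by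
  unfold bwStep at h
  split at h <;> (try split_ifs at h) <;> first | subst h | rcases h with rfl | ⟨_, _, rfl⟩
  all_goals grind [BWPc.Consistent]

theorem pendingColor_self (h : bwStep st p st') {c : Color}
    (hp : (st'.pc p).pendingColor = some c) :
    (st'.pc p).session = (st.pc p).session ∧
      ((st.pc p).pendingColor = some c ∨ c = st.gcolor) := by
  unfold bwStep at h
  split at h <;> (try split_ifs at h) <;> first | subst h | rcases h with rfl | ⟨_, _, rfl⟩
  all_goals grind [BWPc.pendingColor, BWPc.session]

theorem hasColor_self (h : bwStep st p st') {c : Color} (hp : st'.HasColor p c) :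
    st.HasColor p c ∨ c = st.gcolor := by
  unfold bwStep at h
  split at h <;> (try split_ifs at h) <;> first | subst h | rcases h with rfl | ⟨_, _, rfl⟩
  all_goals grind [BWPc.pendingColor, BWState.HasColor, BWTok.init]

theorem token_self (h : bwStep st p st')
    (hc : (st.pc p).Consistent (st.token p) (st.choosing p)) (hp : (st.token p).color ≠ none)
    (hx : st.pc p ≠ .x2) : st'.token p = st.token p := by
  unfold bwStep at h
  split at h <;> (try split_ifs at h) <;> first | subst h | rcases h with rfl | ⟨_, _, rfl⟩
  all_goals grind [BWPc.Consistent, BWTok.init]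

theorem session_self (h : bwStep st p st') {s : ℕ} (hp : (st.pc p).session = some s)
    (hx : st'.pc p ≠ .x2) : (st'.pc p).session = some s := by
  unfold bwStep at h
  split at h <;> (try split_ifs at h) <;> first | subst h | rcases h with rfl | ⟨_, _, rfl⟩
  all_goals grind [BWPc.session]

theorem waiting_self (h : bwStep st p st') (hp : (st.pc p).Waiting) :
    st'.token p = st.token p ∧ ((st'.pc p).Waiting ∨ bwInCS st' p) := by
  unfold bwStep at h
  split at h <;> (try split_ifs at h) <;> first | subst h | rcases h with rfl | ⟨_, _, rfl⟩
  all_goals grind [BWPc.Waiting, bwInCS]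

theorem pastChoosing_self (h : bwStep st p st')
    (hc : (st.pc p).Consistent (st.token p) (st.choosing p)) {i : Fin N}
    (hp : (st'.pc p).PastChoosing i) :
    st'.token p = st.token p ∧ ((st.pc p).PastChoosing i ∨ st.choosing i = false ∨
      (st.token i).session = (st.token p).session) := by
  unfold bwStep at h
  split at h <;> (try split_ifs at h) <;> first | subst h | rcases h with rfl | ⟨_, _, rfl⟩
  all_goals grind [BWPc.PastChoosing, BWPc.Consistent]

theorem not_pastTurn_self (h : bwStep st p st') {q : Fin N} {s : ℕ} {c : Color}
    (hs : (st.pc p).session = some s) (hq : (st.token q).Conflicts s c)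
    (ht : ∀ c' b, (st.pc p).Scanned q → (st.pc p).ticket = some (c', b) →
      if c' = c then (st.token q).number < b else c' = st.gcolor)
    (hp : ¬ (st.pc p).PastTurn q c) : ¬ (st'.pc p).PastTurn q c := by
  generalize ht' : (st.pc p).ticket = t at ht
  unfold bwStep at h
  split at h <;> (try split_ifs at h) <;> first | subst h | rcases h with rfl | ⟨_, _, rfl⟩
  all_goals grind [BWPc.PastTurn, BWPc.Scanned, BWPc.session, BWPc.ticket, BWTok.Conflicts]

theorem ticket_self (h : bwStep st p st') {s b : ℕ} {c : Color}
    (hs : (st'.pc p).session = some s) (ht : (st'.pc p).ticket = some (c, b)) :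
    (st.pc p).session = some s ∧ ((st.pc p).ticket = some (c, b) ∨ c = st.gcolor ∧ b = 1 ∨
      ∃ q, (st.token q).Conflicts s c ∧ b = (st.token q).number + 1 ∧
        ¬ (st'.pc p).PastTurn q c) := by
  unfold bwStep at h
  split at h <;> (try split_ifs at h) <;> first | subst h | rcases h with rfl | ⟨_, _, rfl⟩
  all_goals grind [BWPc.PastTurn, BWPc.session, BWPc.ticket, BWTok.Conflicts]

theorem ticket_color_self (h : bwStep st p st') {b : ℕ} {c : Color}
    (ht : (st'.pc p).ticket = some (c, b)) :
    (∃ b₀, (st.pc p).ticket = some (c, b₀)) ∨ c = st.gcolor := by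
  unfold bwStep at h
  split at h <;> (try split_ifs at h) <;> first | subst h | rcases h with rfl | ⟨_, _, rfl⟩
  all_goals grind [BWPc.ticket]

theorem number_lt_of_scanned_self (h : bwStep st p st') {q : Fin N} {s b : ℕ} {c : Color}
    (hs : (st.pc p).session = some s) (hq : (st.token q).Conflicts s c)
    (hn : ∀ b₀, (st.pc p).Scanned q → (st.pc p).ticket = some (c, b₀) → (st.token q).number < b₀)
    (hp : (st'.pc p).Scanned q) (ht : (st'.pc p).ticket = some (c, b)) :
    (st.token q).number < b := by
  unfold bwStep at h
  split at h <;> (try split_ifs at h) <;> first | subst h | rcases h with rfl | ⟨_, _, rfl⟩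
  all_goals grind [BWPc.Scanned, BWPc.session, BWPc.ticket, BWTok.Conflicts]

theorem exitChecked_self (h : bwStep st p st') {i : Fin N} {c : Color}
    (hp : (st'.pc p).ExitChecked c i) :
    (st.pc p).ExitChecked c i ∨ (∃ s m, st.pc p = .x1 s c m i) ∧
      ((st.token i).session = 0 ∨ (st.token i).color ≠ some c.opp) := by
  unfold bwStep at h
  split at h <;> (try split_ifs at h) <;> first | subst h | rcases h with rfl | ⟨_, _, rfl⟩
  all_goals grind [BWPc.ExitChecked]

theorem exitChecked_of_flip (h : bwStep st p st') (hg : st'.gcolor ≠ st.gcolor) (n : ℕ) :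
    (st.pc p).ExitChecked st.gcolor n := by
  have hopp (c : Color) : c.opp ≠ st.gcolor → c = st.gcolor := not_imp_comm.1 Color.opp_eq_of_ne
  unfold bwStep at h
  split at h <;> (try split_ifs at h) <;> first | subst h | rcases h with rfl | ⟨_, _, rfl⟩
  all_goals grind [BWPc.ExitChecked]

end bwStep

namespace BWPc

theorem Consistent.session_ne_zero {t : BWTok} {ch : Bool} {pc : BWPc}
    (h : pc.Consistent t ch) (ht : t.color ≠ none) : t.session ≠ 0 := by
  cases pc <;> grind [Consistent, BWTok.init]

theorem Consistent.of_pendingColor {t : BWTok} {ch : Bool} {pc : BWPc} {s : ℕ}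
    (h : pc.Consistent t ch) (hs : pc.session = some s) (hpc : pc.pendingColor ≠ none) :
    t.session = s ∧ ch = true := by
  cases pc <;> simp_all [Consistent, session, pendingColor]

theorem exists_session_of_pendingColor {pc : BWPc} {c : Color} (h : pc.pendingColor = some c) :
    ∃ s, pc.session = some s := by
  cases pc <;> simp_all [pendingColor, session]

theorem Consistent.color_of_ticket {t : BWTok} {ch : Bool} {pc : BWPc} {c : Color} {b : ℕ}
    (h : pc.Consistent t ch) (hpc : pc.ticket = some (c, b)) :
    pc.pendingColor = some c ∨ t.color = some c := by
  cases pc <;> simp_all [Consistent, pendingColor, ticket]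

theorem ExitChecked.exists_ticket {pc : BWPc} {c : Color} {n : ℕ} (h : pc.ExitChecked c n) :
    ∃ b, pc.ticket = some (c, b) := by
  cases pc <;> simp_all [ExitChecked, ticket]

end BWPc

/-- Process `i`, requesting session `s`, read GlobalColor before it took its current value and has
not published the color it read. -/
def BWState.Stale (st : BWState N) (i : Fin N) (s : ℕ) : Prop :=
  (st.pc i).session = some s ∧ (st.pc i).pendingColor = some st.gcolor.opp

/-- The inductive invariant. Its heart is `not_hasColor`: a process about to flip GlobalColor
coexists with no process, published or not, of the new color. -/
structure BWInv (st : BWState N) : Prop where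
  consistent (i : Fin N) : (st.pc i).Consistent (st.token i) (st.choosing i)
  not_pastChoosing {i q : Fin N} {s : ℕ} (hi : st.Stale i s)
    (hq : (st.token q).Conflicts s st.gcolor) : ¬ (st.pc q).PastChoosing i
  exists_conflict {i k : Fin N} {s b : ℕ} (hi : st.Stale i s) (hs : (st.pc k).session = some s)
    (hk : (st.pc k).ticket = some (st.gcolor, b)) (hb : b ≠ 1) :
    ∃ q, (st.token q).Conflicts s st.gcolor ∧ (st.token q).number < b ∧
      ¬ (st.pc k).PastTurn q st.gcolor
  not_hasColor {i k : Fin N} (hk : (st.pc k).ExitChecked st.gcolor i) :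
    ¬ st.HasColor i st.gcolor.opp

namespace bwStep

theorem hasColor (h : bwStep st p st') {i : Fin N} {c : Color} (hi : st'.HasColor i c) :
    st.HasColor i c ∨ c = st.gcolor := by
  obtain rfl | hip := eq_or_ne i p
  · exact h.hasColor_self hi
  · obtain ⟨hpc, htok, -⟩ := h.frame hip
    exact .inl (by rwa [BWState.HasColor, hpc, htok] at hi)

theorem stale (h : bwStep st p st') (hg : st'.gcolor = st.gcolor) {i : Fin N} {s : ℕ}
    (hi : st'.Stale i s) : st.Stale i s := by
  rw [BWState.Stale, hg] at hi
  obtain rfl | hip := eq_or_ne i p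
  · obtain ⟨hs, hc⟩ := h.pendingColor_self hi.2
    exact ⟨hs ▸ hi.1, hc.resolve_right st.gcolor.opp_ne⟩
  · rwa [(h.frame hip).1] at hi

end bwStep

namespace BWInv

theorem init (c : Color) : BWInv (bwInit N c) := by
  constructor <;>
    simp [bwInit, BWState.Stale, BWPc.Consistent, BWPc.pendingColor, BWPc.ExitChecked]

theorem consistent_step (hinv : BWInv st) (h : bwStep st p st') (i : Fin N) :
    (st'.pc i).Consistent (st'.token i) (st'.choosing i) := by
  obtain rfl | hip := eq_or_ne i p
  · exact h.consistent_self (hinv.consistent i)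
  · obtain ⟨hpc, htok, hch⟩ := h.frame hip
    rw [hpc, htok, hch]
    exact hinv.consistent i

theorem not_stale_of_x1 (hinv : BWInv st) {i k : Fin N} {s t m n : ℕ}
    (hk : st.pc k = .x1 s st.gcolor m n) : ¬ st.Stale i t := by
  intro hi
  have hc := hinv.consistent k
  rw [hk] at hc
  obtain ⟨htok, hpos, hm⟩ := hc
  obtain rfl | hst := eq_or_ne s t
  · obtain ⟨q, -, -, hq⟩ := hinv.exists_conflict hi (by rw [hk]; rfl) (by rw [hk]; rfl) hm
    exact hq (by rw [hk]; trivial)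
  · have hconf : (st.token k).Conflicts t st.gcolor := by
      rw [htok]
      exact ⟨rfl, hpos.ne', hst⟩
    exact hinv.not_pastChoosing hi hconf (by rw [hk]; trivial)

theorem token_of_conflicts (hinv : BWInv st) (h : bwStep st p st') {i q : Fin N} {s : ℕ}
    (hi : st.Stale i s) (hq : (st.token q).Conflicts s st.gcolor) :
    st'.token q = st.token q := by
  obtain rfl | hqp := eq_or_ne q p
  · refine h.token_self (hinv.consistent q) (by simp [hq.1]) fun hx => ?_
    exact hinv.not_pastChoosing hi hq (by rw [hx]; trivial)
  · exact (h.frame hqp).2.1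

theorem not_pastChoosing_step (hinv : BWInv st) (h : bwStep st p st')
    (hg : st'.gcolor = st.gcolor) {i q : Fin N} {s : ℕ} (hi : st'.Stale i s)
    (hq : (st'.token q).Conflicts s st'.gcolor) : ¬ (st'.pc q).PastChoosing i := by
  replace hi := h.stale hg hi
  rw [hg] at hq
  obtain rfl | hqp := eq_or_ne q p
  · intro hpast
    obtain ⟨htok, hpast₀ | hch | hs⟩ := h.pastChoosing_self (hinv.consistent q) hpast
    all_goals rw [htok] at hq
    · exact hinv.not_pastChoosing hi hq hpast₀
    all_goals obtain ⟨hsi, hchi⟩ := (hinv.consistent i).of_pendingColor hi.1 (by simp [hi.2])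
    · simp [hchi] at hch
    · exact hq.2.2 (hs ▸ hsi)
  · obtain ⟨hpc, htok, -⟩ := h.frame hqp
    rw [htok] at hq
    rw [hpc]
    exact hinv.not_pastChoosing hi hq

theorem exists_conflict_self (hinv : BWInv st) (h : bwStep st p st') {i : Fin N} {s b : ℕ}
    (hi : st.Stale i s) (hs : (st'.pc p).session = some s)
    (ht : (st'.pc p).ticket = some (st.gcolor, b)) (hb : b ≠ 1) :
    ∃ q, (st.token q).Conflicts s st.gcolor ∧ (st.token q).number < b ∧
      ¬ (st'.pc p).PastTurn q st.gcolor := by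
  obtain ⟨hs₀, ht₀ | ⟨-, rfl⟩ | ⟨q, hq, rfl, hturn⟩⟩ := h.ticket_self hs ht
  · obtain ⟨q, hq, hlt, hturn⟩ := hinv.exists_conflict hi hs₀ ht₀ hb
    refine ⟨q, hq, hlt, h.not_pastTurn_self hs₀ hq (fun c' b' _ ht' => ?_) hturn⟩
    obtain ⟨rfl, rfl⟩ : st.gcolor = c' ∧ b = b' := by simpa [ht₀] using ht'
    rwa [if_pos rfl]
  · exact absurd rfl hb
  · exact ⟨q, hq, Nat.lt_succ_self _, hturn⟩

theorem exists_conflict_step (hinv : BWInv st) (h : bwStep st p st')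
    (hg : st'.gcolor = st.gcolor) {i k : Fin N} {s b : ℕ} (hi : st'.Stale i s)
    (hs : (st'.pc k).session = some s) (hk : (st'.pc k).ticket = some (st'.gcolor, b))
    (hb : b ≠ 1) :
    ∃ q, (st'.token q).Conflicts s st'.gcolor ∧ (st'.token q).number < b ∧
      ¬ (st'.pc k).PastTurn q st'.gcolor := by
  replace hi := h.stale hg hi
  rw [hg] at hk ⊢
  suffices ∃ q, (st.token q).Conflicts s st.gcolor ∧ (st.token q).number < b ∧
      ¬ (st'.pc k).PastTurn q st.gcolor by
    obtain ⟨q, hq, hlt⟩ := this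
    exact ⟨q, by rwa [hinv.token_of_conflicts h hi hq, and_iff_right hq]⟩
  obtain rfl | hkp := eq_or_ne k p
  · exact hinv.exists_conflict_self h hi hs hk hb
  · rw [(h.frame hkp).1] at hs hk ⊢
    exact hinv.exists_conflict hi hs hk hb

theorem not_hasColor_step (hinv : BWInv st) (h : bwStep st p st') (hg : st'.gcolor = st.gcolor)
    {i k : Fin N} (hk : (st'.pc k).ExitChecked st'.gcolor i) : ¬ st'.HasColor i st'.gcolor.opp := by
  rw [hg] at hk ⊢
  intro hi'
  have hi := (h.hasColor hi').resolve_right st.gcolor.opp_ne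
  obtain rfl | hkp := eq_or_ne k p
  · obtain hk₀ | ⟨⟨s, m, hx⟩, htest⟩ := h.exitChecked_self hk
    · exact hinv.not_hasColor hk₀ hi
    obtain hpend | hcol := hi
    · obtain ⟨t, ht⟩ := BWPc.exists_session_of_pendingColor hpend
      exact hinv.not_stale_of_x1 hx ⟨ht, hpend⟩
    · obtain hzero | hne := htest
      · exact (hinv.consistent i).session_ne_zero (by simp [hcol]) hzero
      · exact hne hcol
  · rw [(h.frame hkp).1] at hk
    exact hinv.not_hasColor hk hi

theorem not_hasColor_of_flip (hinv : BWInv st) (h : bwStep st p st')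
    (hg : st'.gcolor ≠ st.gcolor) (i : Fin N) : ¬ st'.HasColor i st'.gcolor := by
  intro hi
  have hi₀ := (h.hasColor hi).resolve_right hg
  rw [← Color.opp_eq_of_ne hg.symm] at hi₀
  exact hinv.not_hasColor (h.exitChecked_of_flip hg i) hi₀

theorem step (hinv : BWInv st) (h : bwStep st p st') : BWInv st' := by
  have hcons := hinv.consistent_step h
  by_cases hg : st'.gcolor = st.gcolor
  · exact ⟨hcons, hinv.not_pastChoosing_step h hg, hinv.exists_conflict_step h hg,
      hinv.not_hasColor_step h hg⟩
  have hnone := hinv.not_hasColor_of_flip h hg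
  have hticket {k : Fin N} {b : ℕ} : (st'.pc k).ticket ≠ some (st'.gcolor, b) := fun hk =>
    hnone k ((hcons k).color_of_ticket hk)
  exact {
    consistent := hcons
    not_pastChoosing := fun _ hq => absurd (.inr hq.1) (hnone _)
    exists_conflict := fun _ _ hk => absurd hk hticket
    not_hasColor := fun hk => absurd hk.exists_ticket.choose_spec hticket }

theorem of_run {σ : ℕ → BWState N} (hinit : ∃ c, σ 0 = bwInit N c)
    (hstep : ∀ n, ∃ p, bwStep (σ n) p (σ (n + 1))) (n : ℕ) : BWInv (σ n) := by
  induction n with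
  | zero =>
    obtain ⟨c, hc⟩ := hinit
    exact hc ▸ init c
  | succ n ih => exact ih.step (hstep n).choose_spec

end BWInv

/-- Process `j`, requesting session `s`, stays outside the critical section as long as process `i`,
of color `c`, remains in its waiting room: it is not past `i`, and it has color `c` with a number
above that of `i` (once it has read it), or else the color in which GlobalColor is stuck. -/
structure BWState.Behind (st : BWState N) (j i : Fin N) (s : ℕ) (c : Color) : Prop where
  session : (st.pc j).session = some s
  not_pastTurn : ¬ (st.pc j).PastTurn i c
  color {c' : Color} {b : ℕ} (ht : (st.pc j).ticket = some (c', b)) (hc : c' ≠ c) : c' = st.gcolor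
  number {b : ℕ} (hi : (st.pc j).Scanned i) (ht : (st.pc j).ticket = some (c, b)) :
    (st.token i).number < b

theorem bwStep.waiting (h : bwStep st p st') {i : Fin N} (hi : (st.pc i).Waiting) :
    st'.token i = st.token i ∧ ((st'.pc i).Waiting ∨ bwInCS st' i) := by
  obtain rfl | hip := eq_or_ne i p
  · exact h.waiting_self hi
  · obtain ⟨hpc, htok, -⟩ := h.frame hip
    exact ⟨htok, .inl (hpc ▸ hi)⟩

theorem BWPc.Waiting.not_inCS {i : Fin N} (hi : (st.pc i).Waiting) : ¬ bwInCS st i := by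
  rintro ⟨s, c, m, hcs⟩
  rwa [hcs] at hi

theorem BWInv.gcolor_step_of_hasColor (hinv : BWInv st) (h : bwStep st p st') {i : Fin N}
    {c : Color} (hi : st.HasColor i c) (hc : c ≠ st.gcolor) : st'.gcolor = st.gcolor := by
  by_contra hg
  refine hinv.not_hasColor (h.exitChecked_of_flip hg i) ?_
  rwa [Color.opp_eq_of_ne hc.symm]

namespace BWState.Behind

variable {i j : Fin N} {s : ℕ} {c : Color}

theorem of_d1 (hj : st.pc j = .d1 s) : st.Behind j i s c where
  session := by rw [hj]; rfl
  not_pastTurn := by rw [hj]; exact id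
  color := by simp [hj, BWPc.ticket]
  number := by simp [hj, BWPc.ticket]

theorem not_inCS (hj : st.Behind j i s c) : ¬ bwInCS st j := by
  rintro ⟨t, c', m, hcs⟩
  exact hj.not_pastTurn (by rw [hcs]; trivial)

theorem not_pastTurn_self (hj : st.Behind p i s c) (h : bwStep st p st')
    (hconf : (st.token i).Conflicts s c) : ¬ (st'.pc p).PastTurn i c := by
  refine h.not_pastTurn_self hj.session hconf (fun c' b hscan ht => ?_) hj.not_pastTurn
  split_ifs with hc
  · exact hj.number hscan (hc ▸ ht)
  · exact hj.color ht hc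

theorem step (hj : st.Behind j i s c) (hinv : BWInv st) (h : bwStep st p st')
    (htok : st'.token i = st.token i) (hconf : (st.token i).Conflicts s c) :
    st'.Behind j i s c := by
  have hstuck {c' : Color} (hc : c' ≠ c) (hg : c' = st.gcolor) : c' = st'.gcolor :=
    hg.trans (hinv.gcolor_step_of_hasColor h (.inr hconf.1) (hg ▸ hc.symm)).symm
  obtain rfl | hjp := eq_or_ne j p
  · have hturn := hj.not_pastTurn_self h hconf
    refine ⟨h.session_self hj.session fun hx => hturn (by rw [hx]; trivial), hturn,
      fun ht hc => hstuck hc ?_, fun hscan ht => ?_⟩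
    · obtain ⟨b₀, ht₀⟩ | hg := h.ticket_color_self ht
      · exact hj.color ht₀ hc
      · exact hg
    · rw [htok]
      exact h.number_lt_of_scanned_self hj.session hconf (fun _ => hj.number) hscan ht
  · have hpc := (h.frame hjp).1
    refine ⟨hpc ▸ hj.session, hpc ▸ hj.not_pastTurn, fun ht hc => hstuck hc ?_,
      fun hscan ht => ?_⟩
    · exact hj.color (hpc ▸ ht) hc
    · rw [htok]
      rw [hpc] at hscan ht
      exact hj.number hscan ht

end BWState.Behind

section Run

variable {σ : ℕ → BWState N} {i j : Fin N} {a d n s : ℕ} {c : Color}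

theorem waiting_or_exists_enters_cs (hstep : ∀ n, ∃ p, bwStep (σ n) p (σ (n + 1)))
    (hd : ((σ d).pc i).Waiting) (hdn : d ≤ n) :
    (∀ k, d ≤ k → k ≤ n → ((σ k).pc i).Waiting) ∨
      ∃ m < n, d ≤ m ∧ bwInCS (σ (m + 1)) i ∧ ∀ k, d ≤ k → k ≤ m → ((σ k).pc i).Waiting := by
  induction n, hdn using Nat.le_induction with
  | base => exact .inl fun k hdk hkd => le_antisymm hdk hkd ▸ hd
  | succ n hdn ih =>
    obtain hw | ⟨m, hmn, hm⟩ := ih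
    · obtain ⟨p, hp⟩ := hstep n
      obtain hwait | hcs := (hp.waiting (hw n hdn le_rfl)).2
      · refine .inl fun k hdk hkn => ?_
        obtain hkn | rfl := Nat.le_succ_iff.1 hkn
        · exact hw k hdk hkn
        · exact hwait
      · exact .inr ⟨n, n.lt_succ_self, hdn, hcs, hw⟩
    · exact .inr ⟨m, hmn.trans n.lt_succ_self, hm⟩

theorem token_eq_of_waiting (hstep : ∀ n, ∃ p, bwStep (σ n) p (σ (n + 1))) (hdn : d ≤ n)
    (hw : ∀ k, d ≤ k → k < n → ((σ k).pc i).Waiting) : (σ n).token i = (σ d).token i := by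
  induction n, hdn using Nat.le_induction with
  | base => rfl
  | succ n hdn ih =>
    obtain ⟨p, hp⟩ := hstep n
    rw [(hp.waiting (hw n hdn n.lt_succ_self)).1]
    exact ih fun k hdk hkn => hw k hdk (hkn.trans n.lt_succ_self)

theorem behind_of_waiting (hinit : ∃ c₀, σ 0 = bwInit N c₀)
    (hstep : ∀ n, ∃ p, bwStep (σ n) p (σ (n + 1))) (han : a ≤ n)
    (hw : ∀ k, a ≤ k → k < n → ((σ k).pc i).Waiting)
    (hconf : ((σ a).token i).Conflicts s c) (ha : (σ a).Behind j i s c) :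
    (σ n).Behind j i s c := by
  induction n, han using Nat.le_induction with
  | base => exact ha
  | succ n han ih =>
    obtain ⟨p, hp⟩ := hstep n
    have hw' (k : ℕ) (hak : a ≤ k) (hkn : k < n) := hw k hak (hkn.trans n.lt_succ_self)
    refine (ih hw').step (.of_run hinit hstep n) hp (hp.waiting (hw n han n.lt_succ_self)).1 ?_
    rwa [token_eq_of_waiting hstep han hw']

theorem bw_fcfs_general (hinit : ∃ c₀, σ 0 = bwInit N c₀)
    (hstep : ∀ n, ∃ p, bwStep (σ n) p (σ (n + 1))) {si sj mi : ℕ} (hs : si ≠ sj)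
    (hd : (σ d).pc i = .w1 si c mi 0) (hda : d ≤ a) (ha : (σ a).pc j = .d1 sj) (han : a ≤ n)
    (hn : bwInCS (σ (n + 1)) j) :
    ∃ m ≤ n, (¬ bwInCS (σ m) i ∧ bwInCS (σ (m + 1)) i) ∧ d ≤ m ∧
      ∀ k, d ≤ k → k ≤ m → (σ k).pc i ≠ .remainder := by
  have hwait : ((σ d).pc i).Waiting := by rw [hd]; trivial
  have hdn : d ≤ n + 1 := by omega
  obtain hw | ⟨m, hmn, hdm, hcs, hw⟩ := waiting_or_exists_enters_cs hstep hwait hdn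
  · have hconf : ((σ a).token i).Conflicts sj c := by
      have hcons := (BWInv.of_run hinit hstep d).consistent i
      rw [hd] at hcons
      rw [token_eq_of_waiting hstep hda fun k hdk hka => hw k hdk (by omega), hcons.1]
      exact ⟨rfl, hcons.2.ne', hs⟩
    have hbehind : (σ (n + 1)).Behind j i sj c :=
      behind_of_waiting hinit hstep (by omega) (fun k hak hkn => hw k (by omega) (by omega)) hconf
        (.of_d1 ha)
    exact absurd hn hbehind.not_inCS
  · refine ⟨m, Nat.lt_succ_iff.1 hmn, ⟨(hw m hdm le_rfl).not_inCS, hcs⟩, hdm,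
      fun k hdk hkm hr => ?_⟩
    have hk := hw k hdk hkm
    rwa [hr] at hk

end Run

end

/-- **FCFS for the BWBGME algorithm.**  If process `i` completes its doorway (at step `d`,
requesting session `si`) before process `j` enters its doorway (at step `a`, requesting a
different session `sj`), then `j` does not enter the critical section before `i` does:
whenever `j` enters the CS at step `c2` of that invocation, `i` has already entered the
CS, at some step `c1 ≤ c2` of the invocation whose doorway was completed at `d`. -/
theorem bw_fcfs {N : ℕ} (e : BWExec N) (i j : Fin N) (si sj : ℕ) (ci : Color) (mi : ℕ)
    (hij : i ≠ j) (hs : si ≠ sj)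
    (d : ℕ) (hd : bwCompletesDoorway e i si ci mi d)
    (a : ℕ) (ha : bwEntersDoorway e j sj a) (hda : d < a)
    (c2 : ℕ) (hc2 : bwEntersCS e j c2) (hac : a < c2)
    (hact : bwActiveThrough e j a c2) :
    ∃ c1, c1 ≤ c2 ∧ bwEntersCS e i c1 ∧ d < c1 ∧ bwActiveThrough e i d c1 := by
  exact bw_fcfs_general e.init (fun n => ⟨_, e.step n⟩) hs hd.2
    (Nat.le_succ_of_le hda) ha.2 hac hc2.2
end
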